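/- arXiv:1905.12347 — 2 statements merged into one kernel-verified Lean document; each statement's English description precedes it below -/
import Mathlib

section
/- Let m ≥ 2 and d, N be integers with m < d < N, let 0 < L < 1, and let μ satisfy 0 < μ < 1/(m−1), m ≤ (3 − L − √(8 − 8L))/L, and (1+L(m−1))·(1 − √(1 − 4L(2m−1−Lm)/(1+L(m−1))²))/(2(2m−1−Lm)) ≤ μ ≤ (1+L(m−1))·(1 + √(1 − 4L(2m−1−Lm)/(1+L(m−1))²))/(2(2m−1−Lm)). Let e_1,…,e_m ∈ R^m satisfy ⟨e_i,e_j⟩ = 1 if i = j and −μ otherwise, let ē = (Σ_{i∈[m]} e_i)/‖Σ_{i∈[m]} e_i‖, set μ̃ = μ²m/(1−(m−1)μ), and let r_{m+1},…,r_N be unit vectors in R^{d−m} with max_{m+1≤i<j≤N}|⟨r_i,r_j⟩| ≤ L. Then the dictionary D ∈ R^{d×N} whose columns are d_i = (e_i; 0) for 1 ≤ i ≤ m and d_i = (√μ̃·ē; √(1−μ̃)·r_i) for m+1 ≤ i ≤ N has unit-norm columns and coherence exactly μ. -/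
open Real

noncomputable section

/-- Euclidean dot product on `ℝ^n`. -/
def dot {n : ℕ} (u v : Fin n → ℝ) : ℝ := ∑ i, u i * v i

/-- Dot product on `ℝ^m × ℝ^k`, decomposing coordinatewise. -/
def pdot {m k : ℕ} (u v : (Fin m → ℝ) × (Fin k → ℝ)) : ℝ :=
  dot u.1 v.1 + dot u.2 v.2

/-- Coherence of a dictionary whose columns live in `ℝ^m × ℝ^k`. -/
def pcoherence {m k N : ℕ} (D : Fin N → (Fin m → ℝ) × (Fin k → ℝ)) : ℝ :=
  sSup {x : ℝ | ∃ i j : Fin N, i ≠ j ∧ x = |pdot (D i) (D j)|}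

/-- The normalized sum `ē = (∑ e_i) / ‖∑ e_i‖`. -/
def ebar {m : ℕ} (e : Fin m → Fin m → ℝ) : Fin m → ℝ :=
  (Real.sqrt (dot (∑ i, e i) (∑ i, e i)))⁻¹ • ∑ i, e i

/-- The columns of the dictionary constructed in the proof of the near-tightness
theorem: `d_i = (e_i; 0)` for `i < m` and `d_i = (√μ̃ ē; √(1-μ̃) r_i)` for `i ≥ m`,
where `μ̃ = μ²m/(1-(m-1)μ)`. -/
def Dcol (m d N : ℕ) (μ : ℝ) (e : Fin m → Fin m → ℝ)
    (r : Fin N → Fin (d - m) → ℝ) (i : Fin N) : (Fin m → ℝ) × (Fin (d - m) → ℝ) :=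
  if h : (i : ℕ) < m then (e ⟨i, h⟩, 0)
  else (Real.sqrt (μ ^ 2 * m / (1 - ((m : ℝ) - 1) * μ)) • ebar e,
        Real.sqrt (1 - μ ^ 2 * m / (1 - ((m : ℝ) - 1) * μ)) • r i)

/-
Put `c = 1 - (m - 1)μ` and `S = ∑ e_i`. Then `⟨S, e_j⟩ = c` and `‖S‖² = mc`, so
`⟨ē, e_j⟩ = √(c / m)`, and `√μ̃` is the scale for which `⟨√μ̃ ē, e_j⟩ = μ`. Hence every inner
product of distinct columns involving one of the first `m` is `±μ`, while two later columns have
inner product `μ̃ + (1 - μ̃)⟨r_i, r_j⟩`. The required bound `μ̃ + (1 - μ̃)L ≤ μ` becomes, after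
multiplication by `c > 0`, the quadratic inequality
`(2m - 1 - Lm)μ² - (1 + L(m - 1))μ + L ≤ 0`, whose roots are the two endpoints of the interval
for `μ`; the upper bound on `m` makes its discriminant nonnegative.
-/

section Dot

variable {m k n N : ℕ}

theorem dot_eq_dotProduct (u v : Fin n → ℝ) : dot u v = u ⬝ᵥ v := rfl

theorem dot_smul_left (a : ℝ) (u v : Fin n → ℝ) : dot (a • u) v = a * dot u v :=
  smul_dotProduct a u v

theorem dot_smul_right (a : ℝ) (u v : Fin n → ℝ) : dot u (a • v) = a * dot u v :=
  dotProduct_smul a u v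

theorem dot_zero_right (u : Fin n → ℝ) : dot u 0 = 0 := dotProduct_zero u

theorem pdot_comm (u v : (Fin m → ℝ) × (Fin k → ℝ)) : pdot u v = pdot v u :=
  congrArg₂ (· + ·) (dotProduct_comm u.1 v.1) (dotProduct_comm u.2 v.2)

theorem pcoherence_eq_of_forall_le {D : Fin N → (Fin m → ℝ) × (Fin k → ℝ)} {μ : ℝ}
    (hle : ∀ i j, i ≠ j → |pdot (D i) (D j)| ≤ μ)
    (hattained : ∃ i j, i ≠ j ∧ |pdot (D i) (D j)| = μ) : pcoherence D = μ := by
  obtain ⟨i, j, hij, h⟩ := hattained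
  refine IsGreatest.csSup_eq ⟨⟨i, j, hij, h.symm⟩, ?_⟩
  rintro _ ⟨i, j, hij, rfl⟩
  exact hle i j hij

end Dot

section NegativeEquiangular

variable {ι : Type*} [Fintype ι] [DecidableEq ι] {m n : ℕ} {μ : ℝ}

theorem dot_sum_left_of_gram {e : ι → Fin n → ℝ}
    (he : ∀ i j, dot (e i) (e j) = if i = j then (1 : ℝ) else -μ) (j : ι) :
    dot (∑ i, e i) (e j) = 1 - ((Fintype.card ι : ℝ) - 1) * μ := by
  have hsplit (i : ι) : e i ⬝ᵥ e j = -μ + if i = j then 1 + μ else 0 := by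
    rw [← dot_eq_dotProduct, he]
    split_ifs <;> ring
  simp only [dot_eq_dotProduct, sum_dotProduct, hsplit, Finset.sum_add_distrib, Finset.sum_const,
    Finset.card_univ, nsmul_eq_mul, Finset.sum_ite_eq', Finset.mem_univ, if_true]
  ring

theorem dot_sum_sum_of_gram {e : ι → Fin n → ℝ}
    (he : ∀ i j, dot (e i) (e j) = if i = j then (1 : ℝ) else -μ) :
    dot (∑ i, e i) (∑ i, e i) =
      Fintype.card ι * (1 - ((Fintype.card ι : ℝ) - 1) * μ) :=
  calc dot (∑ i, e i) (∑ i, e i) = ∑ j, dot (∑ i, e i) (e j) := dotProduct_sum _ _ _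
    _ = Fintype.card ι * (1 - ((Fintype.card ι : ℝ) - 1) * μ) := by
      simp only [dot_sum_left_of_gram he, Finset.sum_const, Finset.card_univ, nsmul_eq_mul]

theorem dot_ebar_self {e : Fin m → Fin m → ℝ} (hpos : 0 < dot (∑ i, e i) (∑ i, e i)) :
    dot (ebar e) (ebar e) = 1 := by
  rw [ebar, dot_smul_left, dot_smul_right, ← mul_assoc, ← mul_inv, Real.mul_self_sqrt hpos.le,
    inv_mul_cancel₀ hpos.ne']

theorem dot_ebar_self_of_gram {e : Fin m → Fin m → ℝ} (hm : 0 < m)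
    (hc : 0 < 1 - ((m : ℝ) - 1) * μ)
    (he : ∀ i j, dot (e i) (e j) = if i = j then (1 : ℝ) else -μ) :
    dot (ebar e) (ebar e) = 1 := by
  apply dot_ebar_self
  rw [dot_sum_sum_of_gram he, Fintype.card_fin]
  positivity

theorem dot_ebar_of_gram {e : Fin m → Fin m → ℝ}
    (he : ∀ i j, dot (e i) (e j) = if i = j then (1 : ℝ) else -μ) (j : Fin m) :
    dot (ebar e) (e j) = √((1 - ((m : ℝ) - 1) * μ) / m) := by
  rw [ebar, dot_smul_left, dot_sum_left_of_gram he, dot_sum_sum_of_gram he, Fintype.card_fin]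
  set c := 1 - ((m : ℝ) - 1) * μ
  calc (√(m * c))⁻¹ * c = c / √c / √m := by
        rw [Real.sqrt_mul m.cast_nonneg]
        ring
    _ = √(c / m) := by rw [Real.div_sqrt, Real.sqrt_div' c m.cast_nonneg]

end NegativeEquiangular

/-- The squared weight `μ̃ = μ²m / (1 - (m - 1)μ)` of `ē` in the later columns of the dictionary;
`m` is real because only its arithmetic matters here. -/
def muTilde (m μ : ℝ) : ℝ := μ ^ 2 * m / (1 - (m - 1) * μ)

section MuTilde

variable {m μ L : ℝ}

theorem muTilde_nonneg (hm : 0 ≤ m) (hc : 0 ≤ 1 - (m - 1) * μ) : 0 ≤ muTilde m μ :=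
  div_nonneg (mul_nonneg (sq_nonneg μ) hm) hc

theorem sqrt_muTilde_mul_sqrt (hm : 0 < m) (hμ : 0 ≤ μ) (hc : 0 < 1 - (m - 1) * μ) :
    √(muTilde m μ) * √((1 - (m - 1) * μ) / m) = μ := by
  have hsq : muTilde m μ * ((1 - (m - 1) * μ) / m) = μ ^ 2 := by
    rw [muTilde, div_mul_div_cancel₀ hc.ne', mul_div_cancel_right₀ _ hm.ne']
  rw [← Real.sqrt_mul (muTilde_nonneg hm.le hc.le), hsq, Real.sqrt_sq hμ]

theorem muTilde_add_mul_le_iff (hc : 0 < 1 - (m - 1) * μ) :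
    muTilde m μ + (1 - muTilde m μ) * L ≤ μ ↔
      (2 * m - 1 - L * m) * μ ^ 2 - (1 + L * (m - 1)) * μ + L ≤ 0 := by
  have hmul : (2 * m - 1 - L * m) * μ ^ 2 - (1 + L * (m - 1)) * μ + L =
      (1 - (m - 1) * μ) * (muTilde m μ + (1 - muTilde m μ) * L - μ) := by
    have hdef : muTilde m μ * (1 - (m - 1) * μ) = μ ^ 2 * m := div_mul_cancel₀ _ hc.ne'
    linear_combination (L - 1) * hdef
  rw [hmul, ← not_lt, ← not_lt, mul_pos_iff_of_pos_left hc, sub_pos]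

theorem muTilde_lt_one (hL : L < 1) (hμ : μ < 1)
    (hle : muTilde m μ + (1 - muTilde m μ) * L ≤ μ) : muTilde m μ < 1 := by
  have hprod : 0 < (1 - muTilde m μ) * (1 - L) := by linarith
  exact sub_pos.mp (pos_of_mul_pos_left hprod (sub_nonneg.mpr hL.le))

end MuTilde

section Window

variable {a b c x m L : ℝ}

theorem quadratic_nonpos_of_between_roots (ha : 0 < a) (hb : 0 < b) (hdisc : 4 * c * a ≤ b ^ 2)
    (hlo : b * (1 - √(1 - 4 * c * a / b ^ 2)) / (2 * a) ≤ x)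
    (hhi : x ≤ b * (1 + √(1 - 4 * c * a / b ^ 2)) / (2 * a)) :
    a * x ^ 2 - b * x + c ≤ 0 := by
  have hs : 0 ≤ 1 - 4 * c * a / b ^ 2 := sub_nonneg.mpr ((div_le_one (by positivity)).mpr hdisc)
  have hroot : (b * √(1 - 4 * c * a / b ^ 2)) ^ 2 = b ^ 2 - 4 * c * a := by
    rw [mul_pow, Real.sq_sqrt hs]
    field_simp
  rw [div_le_iff₀ (by positivity)] at hlo
  rw [le_div_iff₀ (by positivity)] at hhi
  have hsq : (2 * a * x - b) ^ 2 ≤ (b * √(1 - 4 * c * a / b ^ 2)) ^ 2 :=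
    sq_le_sq' (by linarith) (by linarith)
  have hmul : 4 * a * (a * x ^ 2 - b * x + c) ≤ 0 := by linarith
  exact nonpos_of_mul_nonpos_right hmul (by positivity)

theorem four_mul_mul_le_sq_of_le_div (hL : 0 < L) (hm : m ≤ (3 - L - √(8 - 8 * L)) / L) :
    4 * L * (2 * m - 1 - L * m) ≤ (1 + L * (m - 1)) ^ 2 := by
  have hsqrt : √(8 - 8 * L) ≤ 3 - L - m * L := by
    linarith only [(le_div_iff₀ hL).mp hm]
  have hsq : 8 - 8 * L ≤ (3 - L - m * L) ^ 2 := (Real.sqrt_le_iff.mp hsqrt).2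
  have hdiscrim : (1 + L * (m - 1)) ^ 2 - 4 * L * (2 * m - 1 - L * m) =
      (3 - L - m * L) ^ 2 - (8 - 8 * L) := by
    ring
  rw [← sub_nonneg, hdiscrim]
  exact sub_nonneg.mpr hsq

theorem quadratic_nonpos_of_mem_window {μ : ℝ} (hm : 1 ≤ m) (hL0 : 0 < L) (hL1 : L < 1)
    (hmL : m ≤ (3 - L - √(8 - 8 * L)) / L)
    (hlo : (1 + L * (m - 1)) *
        (1 - √(1 - 4 * L * (2 * m - 1 - L * m) / (1 + L * (m - 1)) ^ 2)) /
          (2 * (2 * m - 1 - L * m)) ≤ μ)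
    (hhi : μ ≤ (1 + L * (m - 1)) *
        (1 + √(1 - 4 * L * (2 * m - 1 - L * m) / (1 + L * (m - 1)) ^ 2)) /
          (2 * (2 * m - 1 - L * m))) :
    (2 * m - 1 - L * m) * μ ^ 2 - (1 + L * (m - 1)) * μ + L ≤ 0 := by
  have ha : 0 < 2 * m - 1 - L * m := by nlinarith
  have hb : 0 < 1 + L * (m - 1) := by nlinarith
  exact quadratic_nonpos_of_between_roots ha hb (four_mul_mul_le_sq_of_le_div hL0 hmL) hlo hhi

end Window

section Columns

variable {m d N : ℕ} {μ L : ℝ} {e : Fin m → Fin m → ℝ} {r : Fin N → Fin (d - m) → ℝ} {i j : Fin N}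

theorem Dcol_of_lt (hi : (i : ℕ) < m) : Dcol m d N μ e r i = (e ⟨i, hi⟩, 0) := dif_pos hi

theorem Dcol_of_le (hi : m ≤ (i : ℕ)) :
    Dcol m d N μ e r i = (√(muTilde m μ) • ebar e, √(1 - muTilde m μ) • r i) :=
  dif_neg hi.not_gt

theorem pdot_Dcol_of_lt_of_lt
    (he : ∀ i j, dot (e i) (e j) = if i = j then (1 : ℝ) else -μ)
    (hi : (i : ℕ) < m) (hj : (j : ℕ) < m) :
    pdot (Dcol m d N μ e r i) (Dcol m d N μ e r j) = if i = j then 1 else -μ := by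
  simp only [Dcol_of_lt hi, Dcol_of_lt hj, pdot, he, dot_zero_right, add_zero, Fin.mk.injEq,
    Fin.val_inj]

theorem pdot_Dcol_of_le_of_lt (hμ : 0 ≤ μ) (hc : 0 < 1 - ((m : ℝ) - 1) * μ)
    (he : ∀ i j, dot (e i) (e j) = if i = j then (1 : ℝ) else -μ)
    (hi : m ≤ (i : ℕ)) (hj : (j : ℕ) < m) :
    pdot (Dcol m d N μ e r i) (Dcol m d N μ e r j) = μ := by
  have hm : (0 : ℝ) < m := by exact_mod_cast j.val.zero_le.trans_lt hj
  rw [Dcol_of_le hi, Dcol_of_lt hj, pdot, dot_zero_right, add_zero, dot_smul_left,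
    dot_ebar_of_gram he, sqrt_muTilde_mul_sqrt hm hμ hc]

theorem pdot_Dcol_of_le_of_le (h0 : 0 ≤ muTilde m μ) (h1 : muTilde m μ ≤ 1)
    (hebar : dot (ebar e) (ebar e) = 1) (hi : m ≤ (i : ℕ)) (hj : m ≤ (j : ℕ)) :
    pdot (Dcol m d N μ e r i) (Dcol m d N μ e r j) =
      muTilde m μ + (1 - muTilde m μ) * dot (r i) (r j) := by
  simp only [Dcol_of_le hi, Dcol_of_le hj, pdot, dot_smul_left, dot_smul_right, ← mul_assoc,
    Real.mul_self_sqrt h0, Real.mul_self_sqrt (sub_nonneg.mpr h1), hebar, mul_one]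

theorem pdot_Dcol_self (h0 : 0 ≤ muTilde m μ) (h1 : muTilde m μ ≤ 1)
    (he : ∀ i j, dot (e i) (e j) = if i = j then (1 : ℝ) else -μ)
    (hebar : dot (ebar e) (ebar e) = 1)
    (hr : m ≤ (i : ℕ) → dot (r i) (r i) = 1) :
    pdot (Dcol m d N μ e r i) (Dcol m d N μ e r i) = 1 := by
  obtain hi | hi := lt_or_ge (i : ℕ) m
  · rw [pdot_Dcol_of_lt_of_lt he hi hi, if_pos rfl]
  · rw [pdot_Dcol_of_le_of_le h0 h1 hebar hi hi, hr hi]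
    ring

theorem abs_pdot_Dcol_of_lt (hμ : 0 ≤ μ) (hc : 0 < 1 - ((m : ℝ) - 1) * μ)
    (he : ∀ i j, dot (e i) (e j) = if i = j then (1 : ℝ) else -μ)
    (hi : (i : ℕ) < m) (hij : i ≠ j) :
    |pdot (Dcol m d N μ e r i) (Dcol m d N μ e r j)| = μ := by
  obtain hj | hj := lt_or_ge (j : ℕ) m
  · rw [pdot_Dcol_of_lt_of_lt he hi hj, if_neg hij, abs_neg, abs_of_nonneg hμ]
  · rw [pdot_comm, pdot_Dcol_of_le_of_lt hμ hc he hj hi, abs_of_nonneg hμ]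

theorem abs_pdot_Dcol_le_of_le_of_le (h0 : 0 ≤ muTilde m μ) (h1 : muTilde m μ ≤ 1)
    (hebar : dot (ebar e) (ebar e) = 1) (hi : m ≤ (i : ℕ)) (hj : m ≤ (j : ℕ))
    (hr : |dot (r i) (r j)| ≤ L) :
    |pdot (Dcol m d N μ e r i) (Dcol m d N μ e r j)| ≤ muTilde m μ + (1 - muTilde m μ) * L := by
  have h1' : 0 ≤ 1 - muTilde m μ := sub_nonneg.mpr h1
  calc |pdot (Dcol m d N μ e r i) (Dcol m d N μ e r j)|
      = |muTilde m μ + (1 - muTilde m μ) * dot (r i) (r j)| := by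
        rw [pdot_Dcol_of_le_of_le h0 h1 hebar hi hj]
    _ ≤ muTilde m μ + (1 - muTilde m μ) * |dot (r i) (r j)| := by
        refine (abs_add_le _ _).trans_eq ?_
        rw [abs_mul, abs_of_nonneg h0, abs_of_nonneg h1']
    _ ≤ muTilde m μ + (1 - muTilde m μ) * L := by gcongr

end Columns

theorem constructed_dictionary_coherence_general {m d N : ℕ} (hm : 2 ≤ m) (hN : 2 ≤ N)
    {L μ : ℝ} (hL1 : L < 1) (hμ0 : 0 < μ) (hμ1 : μ < 1 / ((m : ℝ) - 1))
    (hquad : (2 * (m : ℝ) - 1 - L * m) * μ ^ 2 - (1 + L * ((m : ℝ) - 1)) * μ + L ≤ 0)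
    {e : Fin m → Fin m → ℝ}
    (he : ∀ i j : Fin m, dot (e i) (e j) = if i = j then (1 : ℝ) else -μ)
    {r : Fin N → Fin (d - m) → ℝ}
    (hr_unit : ∀ i : Fin N, m ≤ (i : ℕ) → dot (r i) (r i) = 1)
    (hr_coh : ∀ i j : Fin N, m ≤ (i : ℕ) → m ≤ (j : ℕ) → i ≠ j →
      |dot (r i) (r j)| ≤ L) :
    (∀ i : Fin N, pdot (Dcol m d N μ e r i) (Dcol m d N μ e r i) = 1) ∧
    pcoherence (Dcol m d N μ e r) = μ := by
  have hm' : (2 : ℝ) ≤ m := by exact_mod_cast hm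
  have hc : 0 < 1 - ((m : ℝ) - 1) * μ := by
    linarith [(lt_div_iff₀' (by linarith : (0 : ℝ) < m - 1)).mp hμ1]
  have hμ_lt_one : μ < 1 :=
    hμ1.trans_le ((div_le_one (by linarith)).mpr (by linarith))
  have hle : muTilde m μ + (1 - muTilde m μ) * L ≤ μ := (muTilde_add_mul_le_iff hc).mpr hquad
  have h0 : 0 ≤ muTilde m μ := muTilde_nonneg m.cast_nonneg hc.le
  have h1 : muTilde m μ ≤ 1 := (muTilde_lt_one hL1 hμ_lt_one hle).le
  have hebar : dot (ebar e) (ebar e) = 1 := dot_ebar_self_of_gram (by omega) hc he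
  refine ⟨fun i => pdot_Dcol_self h0 h1 he hebar (hr_unit i),
    pcoherence_eq_of_forall_le (fun i j hij => ?_) ?_⟩
  · obtain hi | hi := lt_or_ge (i : ℕ) m
    · exact (abs_pdot_Dcol_of_lt hμ0.le hc he hi hij).le
    obtain hj | hj := lt_or_ge (j : ℕ) m
    · rw [pdot_comm]
      exact (abs_pdot_Dcol_of_lt hμ0.le hc he hj hij.symm).le
    · exact (abs_pdot_Dcol_le_of_le_of_le h0 h1 hebar hi hj (hr_coh i j hi hj hij)).trans hle
  · have h01 : (⟨0, by omega⟩ : Fin N) ≠ ⟨1, by omega⟩ := Fin.ne_of_val_ne zero_ne_one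
    exact ⟨_, _, h01, abs_pdot_Dcol_of_lt hμ0.le hc he (show 0 < m by omega) h01⟩

/-- Lemma (coherence of the constructed dictionary): under the stated conditions on
`m, μ, L`, if the Gram matrix of `e_1, …, e_m` has unit diagonal and off-diagonal
entries `-μ`, and `r_{m+1}, …, r_N` are unit vectors with pairwise absolute inner
products at most `L`, then the constructed dictionary has unit-norm columns and
coherence exactly `μ`. -/
theorem constructed_dictionary_coherence
    (m d N : ℕ) (hm : 2 ≤ m) (hmd : m < d) (hdN : d < N)
    (L : ℝ) (hL0 : 0 < L) (hL1 : L < 1)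
    (μ : ℝ) (hμ0 : 0 < μ) (hμ1 : μ < 1 / ((m : ℝ) - 1))
    (hmL : (m : ℝ) ≤ (3 - L - Real.sqrt (8 - 8 * L)) / L)
    (hμlo : (1 + L * ((m : ℝ) - 1)) *
        (1 - Real.sqrt (1 - 4 * L * (2 * (m : ℝ) - 1 - L * m) /
          (1 + L * ((m : ℝ) - 1)) ^ 2)) / (2 * (2 * (m : ℝ) - 1 - L * m)) ≤ μ)
    (hμhi : μ ≤ (1 + L * ((m : ℝ) - 1)) *
        (1 + Real.sqrt (1 - 4 * L * (2 * (m : ℝ) - 1 - L * m) /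
          (1 + L * ((m : ℝ) - 1)) ^ 2)) / (2 * (2 * (m : ℝ) - 1 - L * m)))
    (e : Fin m → Fin m → ℝ)
    (he : ∀ i j : Fin m, dot (e i) (e j) = if i = j then (1 : ℝ) else -μ)
    (r : Fin N → Fin (d - m) → ℝ)
    (hr_unit : ∀ i : Fin N, m ≤ (i : ℕ) → dot (r i) (r i) = 1)
    (hr_coh : ∀ i j : Fin N, m ≤ (i : ℕ) → m ≤ (j : ℕ) → i ≠ j →
      |dot (r i) (r j)| ≤ L) :
    (∀ i : Fin N, pdot (Dcol m d N μ e r i) (Dcol m d N μ e r i) = 1) ∧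
    pcoherence (Dcol m d N μ e r) = μ :=
  constructed_dictionary_coherence_general hm (by omega) hL1 hμ0 hμ1
    (quadratic_nonpos_of_mem_window (by exact_mod_cast one_le_two.trans hm) hL0 hL1 hmL hμlo hμhi)
    he hr_unit hr_coh

end
end

section
/- Let D ∈ R^{d×N} be a dictionary with unit-norm columns d_1,…,d_N and coherence μ, let z ∈ R^N be supported on a set Ω of size m with max_{i∈Ω}|z_i| ≥ (σ/(1−(2m−1)μ))·(1+√β)·√(2(1+α)log N) for some α ≥ 0, σ > 0 and 0 < β < 1. Suppose μ < 1/(2m−1), and that w ∈ R^d satisfies max_{k∈Ω}|⟨d_k, σw⟩| < √β·τ where τ = σ√(2(1+α)log N). Then max_{i∈[N]} |⟨d_i, Dz + σw⟩| > τ; in particular the OMP* stopping criterion ‖D^T(Dz+σw)‖_∞ ≤ τ is not triggered. -/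
/-! Correlate the signal `∑ z_l d_l` with the atom `d_k` for which `|z_k|` is largest on `Ω`. That
atom contributes `z_k`, while each of the other `m - 1` atoms contributes at most `μ |z_k|`, so the
correlation is at least `(1 - (m - 1)μ) |z_k|`. The effective noise factor makes this exceed `τ` by
at least the noise level, with `mμ |z_k|` to spare. -/

open Real

noncomputable section

/-- Coherence of a dictionary, given by its columns: `max_{i ≠ j} |⟨d_i, d_j⟩|`. -/
def coherence {d N : ℕ} (D : Fin N → Fin d → ℝ) : ℝ :=
  sSup {x : ℝ | ∃ i j : Fin N, i ≠ j ∧ x = |dot (D i) (D j)|}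

section CommRing

variable {ι R : Type*} [CommRing R] [LinearOrder R] [IsStrictOrderedRing R] {Ω : Finset ι}

lemma one_sub_card_mul_abs_le_abs_sum_mul {k : ι} (hk : k ∈ Ω) {g z : ι → R} {μ : R}
    (hgk : g k = 1) (hg : ∀ l ∈ Ω, l ≠ k → |g l| ≤ μ) (hz : ∀ l ∈ Ω, |z l| ≤ |z k|) :
    (1 - (Ω.card - 1) * μ) * |z k| ≤ |∑ l ∈ Ω, z l * g l| := by
  classical
  have hoff : |∑ l ∈ Ω.erase k, z l * g l| ≤ (Ω.card - 1) * (|z k| * μ) := by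
    rw [← Finset.cast_card_erase_of_mem hk, ← nsmul_eq_mul]
    refine (Finset.abs_sum_le_sum_abs _ _).trans (Finset.sum_le_card_nsmul _ _ _ fun l hl => ?_)
    obtain ⟨hlk, hl⟩ := Finset.mem_erase.mp hl
    rw [abs_mul]
    exact mul_le_mul (hz l hl) (hg l hl hlk) (abs_nonneg _) (abs_nonneg _)
  calc (1 - (Ω.card - 1) * μ) * |z k|
      = |z k| - (Ω.card - 1) * (|z k| * μ) := by ring
    _ ≤ |z k| - |∑ l ∈ Ω.erase k, z l * g l| := by gcongr
    _ ≤ |z k + ∑ l ∈ Ω.erase k, z l * g l| := abs_sub_abs_le_abs_add _ _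
    _ = |∑ l ∈ Ω, z l * g l| := by rw [← Finset.add_sum_erase Ω _ hk, hgk, mul_one]

theorem omp_star_does_not_stop_early_general {E : Type*} [AddCommMonoid E] [Module R E]
    (B : LinearMap.BilinForm R E) (D : ι → E) {z : ι → R} {μ τ η : R} {e : E}
    (hunit : ∀ i ∈ Ω, B (D i) (D i) = 1)
    (hcoh : ∀ i ∈ Ω, ∀ j ∈ Ω, i ≠ j → |B (D i) (D j)| ≤ μ)
    (hz : ∃ i ∈ Ω, τ + η ≤ (1 - (Ω.card - 1) * μ) * |z i|)
    (hnoise : ∀ k ∈ Ω, |B (D k) e| < η) :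
    ∃ i ∈ Ω, τ < |B (D i) ((∑ l ∈ Ω, z l • D l) + e)| := by
  obtain ⟨i, hi, hzi⟩ := hz
  obtain hτ | hτ := lt_or_ge τ 0
  · exact ⟨i, hi, hτ.trans_le (abs_nonneg _)⟩
  obtain ⟨k, hk, hmax⟩ := Ω.exists_max_image (fun l => |z l|) ⟨i, hi⟩
  have hη : 0 < η := (abs_nonneg _).trans_lt (hnoise i hi)
  have hfactor : 0 < 1 - (Ω.card - 1) * μ :=
    pos_of_mul_pos_left ((add_pos_of_nonneg_of_pos hτ hη).trans_le hzi) (abs_nonneg _)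
  have hsignal : τ + η ≤ |B (D k) (∑ l ∈ Ω, z l • D l)| :=
    calc τ + η ≤ (1 - (Ω.card - 1) * μ) * |z i| := hzi
      _ ≤ (1 - (Ω.card - 1) * μ) * |z k| := mul_le_mul_of_nonneg_left (hmax i hi) hfactor.le
      _ ≤ |∑ l ∈ Ω, z l * B (D k) (D l)| :=
        one_sub_card_mul_abs_le_abs_sum_mul hk (hunit k hk)
          (fun l hl hlk => hcoh k hk l hl hlk.symm) hmax
      _ = |B (D k) (∑ l ∈ Ω, z l • D l)| := by simp only [map_sum, map_smul, smul_eq_mul]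
  refine ⟨k, hk, ?_⟩
  calc τ < |B (D k) (∑ l ∈ Ω, z l • D l)| - |B (D k) e| := by linarith [hnoise k hk]
    _ ≤ |B (D k) ((∑ l ∈ Ω, z l • D l) + e)| := by
      rw [map_add]
      exact abs_sub_abs_le_abs_add _ _

end CommRing

lemma le_one_sub_mul_of_div_le {K : Type*} [Field K] [LinearOrder K] [IsStrictOrderedRing K]
    {m μ a x : K} (hm : 1 < 2 * m) (hμ : 0 ≤ μ) (hMIP : μ < 1 / (2 * m - 1)) (hx : 0 ≤ x)
    (h : a / (1 - (2 * m - 1) * μ) ≤ x) : a ≤ (1 - (m - 1) * μ) * x := by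
  have hfactor : 0 < 1 - (2 * m - 1) * μ := by
    linarith [(lt_div_iff₀' (sub_pos.mpr hm)).mp hMIP]
  have hm0 : 0 ≤ m := by linarith
  calc a ≤ (1 - (2 * m - 1) * μ) * x := (div_le_iff₀' hfactor).mp h
    _ ≤ (1 - (2 * m - 1) * μ) * x + m * μ * x := le_add_of_nonneg_right (by positivity)
    _ = (1 - (m - 1) * μ) * x := by ring

section Coherence

variable {d N : ℕ} (D : Fin N → Fin d → ℝ)

lemma coherence_nonneg : 0 ≤ coherence D := by
  refine Real.sSup_nonneg ?_
  rintro _ ⟨i, j, -, rfl⟩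
  exact abs_nonneg _

lemma abs_dot_le_coherence {i j : Fin N} (hij : i ≠ j) : |dot (D i) (D j)| ≤ coherence D := by
  refine le_csSup ((Set.finite_range fun p : Fin N × Fin N => |dot (D p.1) (D p.2)|).subset ?_
    |>.bddAbove) ⟨i, j, hij, rfl⟩
  rintro _ ⟨i, j, -, rfl⟩
  exact ⟨(i, j), rfl⟩

lemma exists_le_one_sub_mul_of_exists_div_le {z : Fin N → ℝ} {Ω : Finset (Fin N)} {a : ℝ}
    (hMIP : coherence D < 1 / (2 * (Ω.card : ℝ) - 1))
    (hz : ∃ i ∈ Ω, a / (1 - (2 * (Ω.card : ℝ) - 1) * coherence D) ≤ |z i|) :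
    ∃ i ∈ Ω, a ≤ (1 - (Ω.card - 1) * coherence D) * |z i| := by
  obtain ⟨i, hi, hzi⟩ := hz
  have hcard : (1 : ℝ) ≤ Ω.card := mod_cast Finset.card_pos.mpr ⟨i, hi⟩
  exact ⟨i, hi, le_one_sub_mul_of_div_le (by linarith) (coherence_nonneg D) hMIP
    (abs_nonneg _) hzi⟩

end Coherence

/-- Lemma (OMP* does not stop early): if `z` is supported on `Ω` of size `m` with
`max_{i∈Ω}|z_i| ≥ σ_eff (1+√β)√(2(1+α) log N)`, MIP holds, and the noise satisfies
`max_{k∈Ω}|⟨d_k, σw⟩| < √β τ` with `τ = σ√(2(1+α) log N)`, then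
`max_{i∈[N]} |⟨d_i, Dz + σw⟩| > τ`, i.e. the OMP* stopping criterion
`‖Dᵀ(Dz+σw)‖_∞ ≤ τ` is not triggered. -/
theorem omp_star_does_not_stop_early
    (d N m : ℕ) (D : Fin N → Fin d → ℝ)
    (hunit : ∀ i, dot (D i) (D i) = 1)
    (μ : ℝ) (hcoh : coherence D = μ)
    (z : Fin N → ℝ) (Ω : Finset (Fin N))
    (hsupp : ∀ i ∉ Ω, z i = 0) (hcard : Ω.card = m)
    (σ β α : ℝ) (hσ : 0 < σ) (hα : 0 ≤ α) (hβ0 : 0 < β) (hβ1 : β < 1)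
    (hMIP : μ < 1 / (2 * (m : ℝ) - 1))
    (hzmax : ∃ i ∈ Ω,
      σ / (1 - (2 * (m : ℝ) - 1) * μ) * (1 + Real.sqrt β) *
        Real.sqrt (2 * (1 + α) * Real.log N) ≤ |z i|)
    (w : Fin d → ℝ)
    (hnoise : ∀ k ∈ Ω,
      |dot (D k) (σ • w)| < Real.sqrt β * (σ * Real.sqrt (2 * (1 + α) * Real.log N))) :
    ∃ i : Fin N,
      σ * Real.sqrt (2 * (1 + α) * Real.log N) <
        |dot (D i) ((∑ l, z l • D l) + σ • w)| := by
  subst hcoh hcard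
  rw [← Finset.sum_subset Ω.subset_univ fun l _ hl => by rw [hsupp l hl, zero_smul]]
  obtain ⟨k, -, hk⟩ := omp_star_does_not_stop_early_general (dotProductBilin ℝ ℝ) D
    (τ := σ * √(2 * (1 + α) * log N)) (e := σ • w) (fun j _ => hunit j)
    (fun _ _ _ _ hij => abs_dot_le_coherence D hij)
    (exists_le_one_sub_mul_of_exists_div_le D hMIP <|
      hzmax.imp fun _ hi => ⟨hi.1, le_of_eq_of_le (by ring) hi.2⟩) hnoise
  exact ⟨k, hk⟩

end
end
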